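/- Let σ, λ > 0 with λ > σ, ω(x) = (σ√(2π))^{-1} exp(−(x²/2)(σ^{−2} − λ^{−2})) on ℝ, and κ_a(x) = exp(−a|x|) for a > 0, and let α ≥ 1. Then: (i) ‖κ_a^{1/α}‖_{L_1(ℝ)} = 2α/a; (ii) ‖ω/κ_a‖_{L_∞(ℝ)} = (σ√(2π))^{-1} exp(a²/(2(σ^{−2} − λ^{−2}))); (iii) the quantity ‖κ_a^{1/α}‖_{L_1(ℝ)}^α · ‖ω/κ_a‖_{L_∞(ℝ)} is minimized over a > 0 at a_* = √(α(σ^{−2} − λ^{−2})); and (iv) with the minimizer a_*, (‖κ_{a_*}^{1/α}‖_{L_1}^α / ‖ω^{1/α}‖_{L_1}^α)·‖ω/κ_{a_*}‖_{L_∞} = (2e/π)^{α/2}, a value independent of σ and λ. -/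

import Mathlib

open MeasureTheory Real Set
open scoped ENNReal

/-!
Put `s = σ⁻² - λ⁻²` and `c = ω 0`. Completing the square in `|x|` shows that `ω / κ_a` peaks at
`|x| = a / s`. With `t = a² / (α s)`, the product `‖κ_a^{1/α}‖₁^α ‖ω/κ_a‖_∞` then equals
`c (4 α / s · eᵗ / t)^{α/2}`. Since `e t ≤ eᵗ`, with equality at `t = 1`, the minimizer is
`a² = α s`. Dividing the minimum by the Gaussian integral `‖ω^{1/α}‖₁^α = c (2 π α / s)^{α/2}`
cancels `c` and `s`.
-/

theorem integral_exp_neg_mul_abs {b : ℝ} (hb : 0 < b) : ∫ x : ℝ, exp (-(b * |x|)) = 2 / b := by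
  rw [integral_comp_abs (f := fun x ↦ exp (-(b * x)))]
  simp_rw [← neg_mul]
  rw [integral_exp_mul_Ioi (neg_lt_zero.2 hb)]
  simp only [mul_zero, exp_zero, neg_div_neg_eq, mul_one_div]

theorem eLpNorm_top_eq_iSup_enorm_of_continuous {X E : Type*} [TopologicalSpace X]
    [MeasurableSpace X] {μ : Measure X} [μ.IsOpenPosMeasure] [TopologicalSpace E]
    [ContinuousENorm E] {f : X → E} (hf : Continuous f) :
    eLpNorm f ∞ μ = ⨆ x, ‖f x‖ₑ := by
  rw [eLpNorm_exponent_top]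
  exact (iSup_eq_essSup fun x b hb ↦
    (isOpen_lt continuous_const hf.enorm).measure_ne_zero μ ⟨x, hb⟩).symm

/-- The product `‖κ^{1/α}‖₁^α ‖ω/κ‖_∞` that a good quantizer `κ` for the weight `ω` makes small.
Meant for positive `ω`, `κ` with `κ^{1/α}` integrable (otherwise the integral is `0`). It takes
values in `ℝ≥0∞` because the essential supremum of `ω / κ` may be infinite. -/
noncomputable def quantizerCost (α : ℝ) (ω κ : ℝ → ℝ) : ℝ≥0∞ :=
  ENNReal.ofReal ((∫ x, κ x ^ (1 / α)) ^ α) * eLpNorm (fun x ↦ ω x / κ x) ∞ volume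

/-- The quantity `FCTR(p, q, ω, κ)` for `p ≤ q`, which depends on `p` and `q` only through
`α = r - 1/p + 1/q`. Meant for positive `ω`, `κ` with `ω^{1/α}` and `κ^{1/α}` integrable. -/
noncomputable def fctr (α : ℝ) (ω κ : ℝ → ℝ) : ℝ≥0∞ :=
  ENNReal.ofReal ((∫ x, κ x ^ (1 / α)) ^ α / (∫ x, ω x ^ (1 / α)) ^ α)
    * eLpNorm (fun x ↦ ω x / κ x) ∞ volume

theorem fctr_eq_quantizerCost_div {α : ℝ} {ω : ℝ → ℝ} (hω : 0 < (∫ x, ω x ^ (1 / α)) ^ α)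
    (κ : ℝ → ℝ) :
    fctr α ω κ = quantizerCost α ω κ / ENNReal.ofReal ((∫ x, ω x ^ (1 / α)) ^ α) := by
  rw [fctr, quantizerCost, ENNReal.ofReal_div_of_pos hω, ENNReal.mul_div_right_comm]

/-- The weight `ω`, with amplitude `c` in place of `(σ√(2π))⁻¹` and rate `s` in place of
`σ⁻² - λ⁻²`. -/
noncomputable def gaussianWeight (c s x : ℝ) : ℝ := c * exp (-(x ^ 2 / 2) * s)

/-- The exponential quantizer `κ_a`, of decay rate `a`. -/
noncomputable def expQuantizer (a x : ℝ) : ℝ := exp (-(a * |x|))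

section

variable {c s a α : ℝ}

theorem integral_expQuantizer_rpow (ha : 0 < a) (hα : 0 < α) :
    ∫ x, expQuantizer a x ^ (1 / α) = 2 * α / a := by
  have rpow_eq (x : ℝ) : expQuantizer a x ^ (1 / α) = exp (-(a / α * |x|)) := by
    rw [expQuantizer, ← exp_mul]
    congr 1
    ring
  simp_rw [rpow_eq]
  rw [integral_exp_neg_mul_abs (by positivity), div_div_eq_mul_div]

theorem integral_gaussianWeight_rpow (hc : 0 ≤ c) (hα : α ≠ 0) :
    ∫ x, gaussianWeight c s x ^ (1 / α) = c ^ (1 / α) * √(2 * π * α / s) := by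
  have rpow_eq (x : ℝ) :
      gaussianWeight c s x ^ (1 / α) = c ^ (1 / α) * exp (-(s / (2 * α)) * x ^ 2) := by
    rw [gaussianWeight, mul_rpow hc (exp_pos _).le, ← exp_mul]
    congr 2
    field_simp
  simp_rw [rpow_eq]
  rw [integral_const_mul, integral_gaussian, div_div_eq_mul_div]
  ring_nf

theorem integral_gaussianWeight_rpow_rpow (hc : 0 ≤ c) (hs : 0 ≤ s) (hα : 0 < α) :
    (∫ x, gaussianWeight c s x ^ (1 / α)) ^ α = c * (2 * π * α / s) ^ (α / 2) := by
  rw [integral_gaussianWeight_rpow hc hα.ne', mul_rpow (by positivity) (by positivity),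
    ← rpow_mul hc, one_div_mul_cancel hα.ne', rpow_one, sqrt_eq_rpow, ← rpow_mul (by positivity),
    one_div_mul_eq_div]

theorem gaussianWeight_div_expQuantizer (hs : s ≠ 0) (x : ℝ) :
    gaussianWeight c s x / expQuantizer a x
      = c * exp (a ^ 2 / (2 * s) - s / 2 * (|x| - a / s) ^ 2) := by
  rw [gaussianWeight, expQuantizer, mul_div_assoc, ← exp_sub, ← sq_abs x]
  congr 2
  field_simp
  ring

theorem eLpNorm_top_gaussianWeight_div_expQuantizer (hc : 0 ≤ c) (hs : 0 < s) (ha : 0 ≤ a) :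
    eLpNorm (fun x ↦ gaussianWeight c s x / expQuantizer a x) ∞ volume
      = ENNReal.ofReal (c * exp (a ^ 2 / (2 * s))) := by
  simp_rw [gaussianWeight_div_expQuantizer hs.ne']
  rw [eLpNorm_top_eq_iSup_enorm_of_continuous (by fun_prop)]
  simp_rw [enorm_of_nonneg (mul_nonneg hc (exp_pos _).le)]
  refine le_antisymm (iSup_le fun x ↦ ?_) (le_iSup_of_le (a / s) ?_)
  · gcongr
    exact sub_le_self _ (by positivity)
  · rw [abs_of_nonneg (div_nonneg ha hs.le), sub_self, zero_pow two_ne_zero, mul_zero, sub_zero]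

theorem div_rpow_mul_exp_sq_div (hs : s ≠ 0) (ha : 0 < a) (hα : 0 < α) :
    (2 * α / a) ^ α * exp (a ^ 2 / (2 * s))
      = (4 * α / s * (exp (a ^ 2 / (α * s)) / (a ^ 2 / (α * s)))) ^ (α / 2) := by
  have rpow_eq : (2 * α / a) ^ α = ((2 * α / a) ^ 2) ^ (α / 2) := by
    rw [← rpow_natCast, ← rpow_mul (by positivity), Nat.cast_ofNat, mul_div_cancel₀ _ two_ne_zero]
  have exp_eq : exp (a ^ 2 / (2 * s)) = exp (a ^ 2 / (α * s)) ^ (α / 2) := by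
    rw [← exp_mul]
    congr 1
    field_simp
  rw [rpow_eq, exp_eq, ← mul_rpow (by positivity) (by positivity)]
  congr 1
  field_simp
  norm_num

theorem quantizerCost_gaussianWeight_expQuantizer
    (hc : 0 ≤ c) (hs : 0 < s) (ha : 0 < a) (hα : 0 < α) :
    quantizerCost α (gaussianWeight c s) (expQuantizer a)
      = ENNReal.ofReal
          (c * (4 * α / s * (exp (a ^ 2 / (α * s)) / (a ^ 2 / (α * s)))) ^ (α / 2)) := by
  rw [quantizerCost, integral_expQuantizer_rpow ha hα,
    eLpNorm_top_gaussianWeight_div_expQuantizer hc hs ha.le, ← ENNReal.ofReal_mul (by positivity),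
    mul_left_comm, div_rpow_mul_exp_sq_div hs.ne' ha hα]

theorem quantizerCost_gaussianWeight_expQuantizer_sqrt (hc : 0 ≤ c) (hs : 0 < s) (hα : 0 < α) :
    quantizerCost α (gaussianWeight c s) (expQuantizer √(α * s))
      = ENNReal.ofReal (c * (4 * α / s * exp 1) ^ (α / 2)) := by
  have hαs : 0 < α * s := mul_pos hα hs
  rw [quantizerCost_gaussianWeight_expQuantizer hc hs (sqrt_pos.2 hαs) hα, sq_sqrt hαs.le,
    div_self hαs.ne', div_one]

theorem quantizerCost_expQuantizer_sqrt_le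
    (hc : 0 ≤ c) (hs : 0 < s) (ha : 0 < a) (hα : 0 < α) :
    quantizerCost α (gaussianWeight c s) (expQuantizer √(α * s))
      ≤ quantizerCost α (gaussianWeight c s) (expQuantizer a) := by
  rw [quantizerCost_gaussianWeight_expQuantizer_sqrt hc hs hα,
    quantizerCost_gaussianWeight_expQuantizer hc hs ha hα]
  gcongr
  exact (le_div_iff₀ (by positivity)).2 exp_one_mul_le_exp

theorem fctr_gaussianWeight_expQuantizer_sqrt (hc : 0 < c) (hs : 0 < s) (hα : 0 < α) :
    fctr α (gaussianWeight c s) (expQuantizer √(α * s))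
      = ENNReal.ofReal ((2 * exp 1 / π) ^ (α / 2)) := by
  have integral_eq := integral_gaussianWeight_rpow_rpow hc.le hs.le hα
  have integral_pos : 0 < (∫ x, gaussianWeight c s x ^ (1 / α)) ^ α := by
    rw [integral_eq]
    positivity
  have ratio_eq : 4 * α / s * exp 1 / (2 * π * α / s) = 2 * exp 1 / π := by
    field_simp
    norm_num
  rw [fctr_eq_quantizerCost_div integral_pos,
    quantizerCost_gaussianWeight_expQuantizer_sqrt hc.le hs hα,
    ← ENNReal.ofReal_div_of_pos integral_pos, integral_eq, mul_div_mul_left _ _ hc.ne',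
    ← div_rpow (by positivity) (by positivity), ratio_eq]

theorem stmt_11_general (hc : 0 < c) (hs : 0 < s) (hα : 0 < α) :
    (∀ a, 0 < a → ∫ x, expQuantizer a x ^ (1 / α) = 2 * α / a)
    ∧ (∀ a, 0 < a →
        eLpNorm (fun x ↦ gaussianWeight c s x / expQuantizer a x) ∞ volume
          = ENNReal.ofReal (c * exp (a ^ 2 / (2 * s))))
    ∧ (∀ a, 0 < a →
        quantizerCost α (gaussianWeight c s) (expQuantizer √(α * s))
          ≤ quantizerCost α (gaussianWeight c s) (expQuantizer a))
    ∧ fctr α (gaussianWeight c s) (expQuantizer √(α * s))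
        = ENNReal.ofReal ((2 * exp 1 / π) ^ (α / 2)) :=
  ⟨fun _ ha ↦ integral_expQuantizer_rpow ha hα,
    fun _ ha ↦ eLpNorm_top_gaussianWeight_div_expQuantizer hc.le hs ha.le,
    fun _ ha ↦ quantizerCost_expQuantizer_sqrt_le hc.le hs ha hα,
    fctr_gaussianWeight_expQuantizer_sqrt hc hs hα⟩

end

/-- Gaussian-ratio weight `ω(x) = (σ√(2π))⁻¹ exp(−(x²/2)(σ⁻² − λ⁻²))`
(`λ > σ > 0`) and exponential quantizer `κ_a(x) = e^{−a|x|}`, `α ≥ 1`: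
(i) `‖κ_a^{1/α}‖_{L₁(ℝ)} = 2α/a`;
(ii) `‖ω/κ_a‖_{L_∞(ℝ)} = (σ√(2π))⁻¹ exp(a²/(2(σ⁻² − λ⁻²)))`;
(iii) `a ↦ ‖κ_a^{1/α}‖₁^α ‖ω/κ_a‖_∞` is minimized over `a > 0` at
`a⋆ = √(α(σ⁻² − λ⁻²))`;
(iv) `(‖κ_{a⋆}^{1/α}‖₁^α/‖ω^{1/α}‖₁^α) ‖ω/κ_{a⋆}‖_∞ = (2e/π)^{α/2}`. -/
theorem stmt_11 (σ lam : ℝ) (hσ : 0 < σ) (hlam : 0 < lam) (hσlam : σ < lam)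
    (α : ℝ) (hα : 1 ≤ α) (ω : ℝ → ℝ) (κ : ℝ → ℝ → ℝ) (astar : ℝ)
    (hω : ω = fun x : ℝ =>
      (σ * Real.sqrt (2 * π))⁻¹ * Real.exp (-(x ^ 2 / 2) * ((σ ^ 2)⁻¹ - (lam ^ 2)⁻¹)))
    (hκ : κ = fun (a x : ℝ) => Real.exp (-(a * |x|)))
    (hastar : astar = Real.sqrt (α * ((σ ^ 2)⁻¹ - (lam ^ 2)⁻¹))) :
    (∀ a : ℝ, 0 < a → ∫ x : ℝ, κ a x ^ (1 / α) = 2 * α / a)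
    ∧ (∀ a : ℝ, 0 < a →
        eLpNorm (fun x => ω x / κ a x) ⊤ volume
          = ENNReal.ofReal
              ((σ * Real.sqrt (2 * π))⁻¹
                * Real.exp (a ^ 2 / (2 * ((σ ^ 2)⁻¹ - (lam ^ 2)⁻¹)))))
    ∧ (∀ a : ℝ, 0 < a →
        ENNReal.ofReal ((∫ x : ℝ, κ astar x ^ (1 / α)) ^ α)
            * eLpNorm (fun x => ω x / κ astar x) ⊤ volume
          ≤ ENNReal.ofReal ((∫ x : ℝ, κ a x ^ (1 / α)) ^ α)
              * eLpNorm (fun x => ω x / κ a x) ⊤ volume)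
    ∧ ENNReal.ofReal
          ((∫ x : ℝ, κ astar x ^ (1 / α)) ^ α / (∫ x : ℝ, ω x ^ (1 / α)) ^ α)
          * eLpNorm (fun x => ω x / κ astar x) ⊤ volume
        = ENNReal.ofReal ((2 * Real.exp 1 / π) ^ (α / 2)) := by
  subst hω hκ hastar
  exact stmt_11_general (by positivity)
    (sub_pos.2 (inv_strictAnti₀ (by positivity) (by gcongr))) (zero_lt_one.trans_le hα)
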